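/- Let u ∈ BV(X). Then for μ-a.e. x ∈ X the following holds: for every set A ⊆ X having density 0 at x, lim_{r→0} (1/r)·(1/μ(B(x,r)))·∫_{A∩B(x,r)} |u − u(x)| dμ = 0. -/

import Mathlib

open MeasureTheory Metric Filter Set Topology
open scoped NNReal ENNReal

noncomputable section

universe u

/-- The measure `μ` is doubling with constant `Cd`:
`0 < μ(B(x,2r)) ≤ Cd·μ(B(x,r)) < ∞` for every `x` and every `r > 0`. -/
def IsDoublingWith {X : Type u} [PseudoMetricSpace X] [MeasurableSpace X]
    (μ : Measure X) (Cd : ℝ≥0) : Prop :=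
  ∀ (x : X) (r : ℝ), 0 < r →
    0 < μ (ball x (2 * r)) ∧
      μ (ball x (2 * r)) ≤ (Cd : ℝ≥0∞) * μ (ball x r) ∧
      (Cd : ℝ≥0∞) * μ (ball x r) < ⊤

/-- `X` is a geodesic space: any two points are joined by a unit-speed geodesic. -/
def IsGeodesic (X : Type u) [PseudoMetricSpace X] : Prop :=
  ∀ x y : X, ∃ γ : ℝ → X,
    LipschitzOnWith 1 γ (Icc 0 (dist x y)) ∧ γ 0 = x ∧ γ (dist x y) = y

/-- `g` is an upper gradient of `u`: for every `L ≥ 0` and every `1`-Lipschitz curve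
`γ : [0,L] → X`, `|u(γ 0) − u(γ L)| ≤ ∫₀^L g(γ t) dt`. -/
def IsUpperGradientOf {X : Type u} [PseudoMetricSpace X] (g u : X → ℝ) : Prop :=
  ∀ L : ℝ, 0 ≤ L → ∀ γ : ℝ → X, LipschitzOnWith 1 γ (Icc 0 L) →
    |u (γ 0) - u (γ L)| ≤ ∫ t in (0:ℝ)..L, g (γ t)

/-- The lower pointwise Lipschitz constant
`lip u (x) = liminf_{r→0} r⁻¹ sup_{y ∈ B(x,r)} |u y − u x|`. -/
def lipConst {X : Type u} [PseudoMetricSpace X] (u : X → ℝ) (x : X) : ℝ≥0∞ :=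
  Filter.liminf
    (fun r : ℝ => ⨆ y ∈ ball x r, ENNReal.ofReal (|u y - u x| / r)) (𝓝[>] (0:ℝ))

/-- `u` is locally Lipschitz on `W`: Lipschitz on every closed bounded subset of `W`. -/
def LocallyLipschitzOnSet {X : Type u} [PseudoMetricSpace X] (u : X → ℝ) (W : Set X) : Prop :=
  ∀ K : Set X, IsClosed K → Bornology.IsBounded K → K ⊆ W →
    ∃ L : ℝ≥0, LipschitzOnWith L u K

/-- `u i → f` in `L¹_loc(W)`. -/
def TendstoL1loc {X : Type u} [PseudoMetricSpace X] [MeasurableSpace X]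
    (μ : Measure X) (u : ℕ → X → ℝ) (f : X → ℝ) (W : Set X) : Prop :=
  ∀ K : Set X, IsClosed K → Bornology.IsBounded K → K ⊆ W →
    Tendsto (fun i => ∫⁻ x in K, ENNReal.ofReal |u i x - f x| ∂μ) atTop (𝓝 0)

/-- Total variation `V(f,W)` of `f` on an open set `W`:
the infimum over sequences of locally Lipschitz functions converging to `f` in `L¹_loc(W)`
of the liminf of `∫_W lip u_i dμ`. -/
def totVarOn {X : Type u} [PseudoMetricSpace X] [MeasurableSpace X]
    (μ : Measure X) (f : X → ℝ) (W : Set X) : ℝ≥0∞ :=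
  ⨅ (us : ℕ → X → ℝ) (_ : ∀ i, LocallyLipschitzOnSet (us i) W)
    (_ : TendstoL1loc μ us f W),
    Filter.liminf (fun i => ∫⁻ x in W, lipConst (us i) x ∂μ) atTop

/-- Total variation `V(f,A)` of `f` on an arbitrary set `A`:
infimum of `V(f,W)` over open `W ⊇ A`. -/
def totVarSet {X : Type u} [PseudoMetricSpace X] [MeasurableSpace X]
    (μ : Measure X) (f : X → ℝ) (A : Set X) : ℝ≥0∞ :=
  ⨅ (W : Set X) (_ : IsOpen W) (_ : A ⊆ W), totVarOn μ f W

/-- `f` is of bounded variation: locally integrable and `V(f,X) < ∞`. -/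
def IsBV {X : Type u} [MetricSpace X] [MeasurableSpace X]
    (μ : Measure X) (f : X → ℝ) : Prop :=
  LocallyIntegrable f μ ∧ totVarOn μ f Set.univ < ⊤

/-- `(X,d,μ)` supports a `1`-Poincaré inequality with constant `CP`. -/
def SupportsPoincare {X : Type u} [MetricSpace X] [MeasurableSpace X]
    (μ : Measure X) (CP : ℝ) : Prop :=
  ∀ u : X → ℝ, LocallyLipschitzOnSet u Set.univ →
    ∀ g : X → ℝ, (∀ x, 0 ≤ g x) → Measurable g → IsUpperGradientOf g u →
      ∀ (x : X) (r : ℝ), 0 < r →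
        (⨍ y in ball x r, |u y - (⨍ z in ball x r, u z ∂μ)| ∂μ) ≤
          CP * r * (⨍ y in ball x r, g y ∂μ)

/-- Standing assumptions: a complete geodesic metric measure space with at least two
points, whose measure is doubling and supports a 1-Poincaré inequality. -/
def GoodSpace (X : Type u) [MetricSpace X] [MeasurableSpace X]
    (μ : Measure X) (Cd : ℝ≥0) (CP : ℝ) : Prop :=
  Nontrivial X ∧ CompleteSpace X ∧ IsGeodesic X ∧
    IsDoublingWith μ Cd ∧ SupportsPoincare μ CP

/-- The codimension-1 Hausdorff measure
`𝓗(A) = sup_{δ>0} inf { Σ μ(B_i)/r_i : 0 < r_i ≤ δ, A ⊆ ⋃ B_i }`,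
the infimum over countable coverings of `A` by balls (balls of nonpositive radius
are empty and contribute `0`). -/
def codimOneH {X : Type u} [PseudoMetricSpace X] [MeasurableSpace X]
    (μ : Measure X) (A : Set X) : ℝ≥0∞ :=
  ⨆ (δ : ℝ) (_ : 0 < δ),
    ⨅ (c : ℕ → X) (r : ℕ → ℝ) (_ : ∀ i, r i ≤ δ)
      (_ : A ⊆ ⋃ i, ball (c i) (r i)),
      ∑' i, if 0 < r i then μ (ball (c i) (r i)) / ENNReal.ofReal (r i) else 0

/-- The measure theoretic boundary `∂*E`. -/
def measBdry {X : Type u} [PseudoMetricSpace X] [MeasurableSpace X]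
    (μ : Measure X) (E : Set X) : Set X :=
  {x : X |
    0 < Filter.limsup (fun r : ℝ => μ (E ∩ ball x r) / μ (ball x r)) (𝓝[>] (0:ℝ)) ∧
    0 < Filter.limsup (fun r : ℝ => μ (Eᶜ ∩ ball x r) / μ (ball x r)) (𝓝[>] (0:ℝ))}

/-- `A` has density `0` at `x`. -/
def DensityZeroAt {X : Type u} [PseudoMetricSpace X] [MeasurableSpace X]
    (μ : Measure X) (A : Set X) (x : X) : Prop :=
  Tendsto (fun r : ℝ => μ (A ∩ ball x r) / μ (ball x r)) (𝓝[>] (0:ℝ)) (𝓝 0)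

/-- `A` has density `1` at `x`. -/
def DensityOneAt {X : Type u} [PseudoMetricSpace X] [MeasurableSpace X]
    (μ : Measure X) (A : Set X) (x : X) : Prop :=
  Tendsto (fun r : ℝ => μ (A ∩ ball x r) / μ (ball x r)) (𝓝[>] (0:ℝ)) (𝓝 1)

/-- `x` is a Lebesgue point of `u`. -/
def LebesguePointOf {X : Type u} [MetricSpace X] [MeasurableSpace X]
    (μ : Measure X) (u : X → ℝ) (x : X) : Prop :=
  Tendsto (fun r : ℝ => ⨍ y in ball x r, |u y - u x| ∂μ) (𝓝[>] (0:ℝ)) (𝓝 0)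

/-- `u` is a Borel representative whose value at each Lebesgue point equals the limit
of its ball averages. -/
def PreciseRep {X : Type u} [MetricSpace X] [MeasurableSpace X]
    (μ : Measure X) (u : X → ℝ) : Prop :=
  Measurable u ∧ ∀ (x : X) (c : ℝ),
    Tendsto (fun r : ℝ => ⨍ y in ball x r, u y ∂μ) (𝓝[>] (0:ℝ)) (𝓝 c) → u x = c

/-- The restricted maximal function `M_R ν (x) = sup_{0<r≤R} ν(B(x,r))/μ(B(x,r))`. -/
def restrMaximal {X : Type u} [PseudoMetricSpace X] [MeasurableSpace X]
    (μ ν : Measure X) (R : ℝ) (x : X) : ℝ≥0∞ :=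
  ⨆ (r : ℝ) (_ : 0 < r) (_ : r ≤ R), ν (ball x r) / μ (ball x r)

/-- `F_g(x,y)`: the infimum of `∫_γ g ds` over 1-Lipschitz curves `γ : [0,L] → Z`
joining `x` to `y` (the infimum over the empty set is `∞`). -/
def curveInf {Z : Type u} [PseudoMetricSpace Z] (g : Z → ℝ) (x y : Z) : ℝ≥0∞ :=
  ⨅ (L : ℝ) (_ : 0 ≤ L) (γ : ℝ → Z) (_ : LipschitzOnWith 1 γ (Icc 0 L))
    (_ : γ 0 = x) (_ : γ L = y),
    ∫⁻ t in Icc (0:ℝ) L, ENNReal.ofReal (g (γ t))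

/-- Weak-star convergence of measures: test against continuous, compactly
supported functions. -/
def WeakStar {Z : Type u} [MetricSpace Z] [MeasurableSpace Z]
    (ν : ℕ → Measure Z) (m : Measure Z) : Prop :=
  ∀ φ : Z → ℝ, Continuous φ → HasCompactSupport φ →
    Tendsto (fun n => ∫ x, φ x ∂(ν n)) atTop (𝓝 (∫ x, φ x ∂m))

/-- `φ ∈ BV_c(U)`: a BV function whose support is compact and contained in `U`. -/
def MemBVc {X : Type u} [MetricSpace X] [MeasurableSpace X]
    (μ : Measure X) (φ : X → ℝ) (U : Set X) : Prop :=
  IsBV μ φ ∧ IsCompact (tsupport φ) ∧ tsupport φ ⊆ U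


namespace IsDoublingWith

variable {X : Type u} [MetricSpace X] [MeasurableSpace X] {μ : Measure X} {Cd : ℝ≥0}

theorem measure_ball_pos (h : IsDoublingWith μ Cd) (x : X) {r : ℝ} (hr : 0 < r) :
    0 < μ (ball x r) := by
  have := (h x (r / 2) (by positivity)).1
  rwa [mul_div_cancel₀ r two_ne_zero] at this

theorem measure_ball_lt_top (h : IsDoublingWith μ Cd) (x : X) (r : ℝ) :
    μ (ball x r) < ⊤ := by
  rcases le_or_gt r 0 with hr | hr
  · simp [ball_eq_empty.2 hr]
  · have := h x (r / 2) (by positivity)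
    rw [mul_div_cancel₀ r two_ne_zero] at this
    exact this.2.1.trans_lt this.2.2

theorem measure_ball_two_pow_mul_le (h : IsDoublingWith μ Cd) (x : X) {r : ℝ} (hr : 0 < r)
    (n : ℕ) : μ (ball x (2 ^ n * r)) ≤ (Cd : ℝ≥0∞) ^ n * μ (ball x r) := by
  induction n with
  | zero => simp
  | succ n ih =>
    calc μ (ball x (2 ^ (n + 1) * r)) = μ (ball x (2 * (2 ^ n * r))) := by ring_nf
      _ ≤ Cd * μ (ball x (2 ^ n * r)) := (h x _ (by positivity)).2.1
      _ ≤ Cd * ((Cd : ℝ≥0∞) ^ n * μ (ball x r)) := by gcongr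
      _ = _ := by ring

theorem measure_le_of_subset_ball (h : IsDoublingWith μ Cd) {x : X} {r : ℝ} (hr : 0 < r)
    (n : ℕ) {S : Set X} (hS : S ⊆ ball x (2 ^ n * r)) :
    μ S ≤ (Cd : ℝ≥0∞) ^ n * μ (ball x r) :=
  (measure_mono hS).trans (h.measure_ball_two_pow_mul_le x hr n)

theorem isLocallyFiniteMeasure (h : IsDoublingWith μ Cd) : IsLocallyFiniteMeasure μ :=
  ⟨fun x => ⟨ball x 1, ball_mem_nhds x one_pos, h.measure_ball_lt_top x 1⟩⟩

theorem sigmaFinite (h : IsDoublingWith μ Cd) : SigmaFinite μ := by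
  rcases isEmpty_or_nonempty X with hX | ⟨⟨x⟩⟩
  · rw [Measure.eq_zero_of_isEmpty μ]
    infer_instance
  · exact ⟨⟨{ set := fun n : ℕ => ball x n
              set_mem := fun _ => trivial
              finite := fun n => h.measure_ball_lt_top x n
              spanning := iUnion_ball_nat x }⟩⟩

/-- Any set is covered by balls of radius `s` centred in it whose shrunken copies are disjoint. -/
theorem _root_.Metric.exists_disjoint_ball_cover {X : Type u} [MetricSpace X] (T : Set X) {s : ℝ}
    (hs : 0 < s) :
    ∃ S ⊆ T, (S.PairwiseDisjoint fun z => ball z (s / 4)) ∧ T ⊆ ⋃ z ∈ S, ball z s := by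
  obtain ⟨S, hST, hd, hc⟩ := Vitali.exists_disjoint_subfamily_covering_enlargement_ball T id
    (fun _ => s / 4) (s / 4) (fun _ _ => le_rfl) 4 (by norm_num)
  refine ⟨S, hST, hd, fun x hx => ?_⟩
  obtain ⟨b, hb, hxb⟩ := hc x hx
  rw [mul_div_cancel₀ s four_ne_zero] at hxb
  exact mem_biUnion hb (hxb (mem_ball_self (by positivity)))

theorem secondCountableTopology [BorelSpace X] (h : IsDoublingWith μ Cd) :
    SecondCountableTopology X := by
  have := h.sigmaFinite
  refine secondCountable_of_almost_dense_set fun ε hε => ?_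
  obtain ⟨S, -, hd, hc⟩ := Metric.exists_disjoint_ball_cover (univ : Set X) hε
  refine ⟨S, ?_, fun x => ?_⟩
  · have hcount := Measure.countable_meas_pos_of_disjoint_iUnion (μ := μ)
      (As := fun z : S => ball (z : X) (ε / 4)) (fun _ => measurableSet_ball)
      (fun a b hab => hd a.2 b.2 (Subtype.coe_ne_coe.2 hab))
    have huniv : {z : S | 0 < μ (ball (z : X) (ε / 4))} = univ :=
      eq_univ_of_forall fun z => h.measure_ball_pos _ (by positivity)
    rw [huniv] at hcount
    exact countable_univ_iff.1 hcount
  · obtain ⟨y, hy, hxy⟩ := mem_iUnion₂.1 (hc (mem_univ x))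
    exact ⟨y, hy, (mem_ball.1 hxy).le⟩

theorem isUnifLocDoublingMeasure (h : IsDoublingWith μ Cd) : IsUnifLocDoublingMeasure μ := by
  refine ⟨⟨Cd ^ 2, ?_⟩⟩
  filter_upwards [self_mem_nhdsWithin] with ε (hε : 0 < ε) x
  calc μ (closedBall x (2 * ε)) ≤ (Cd : ℝ≥0∞) ^ 2 * μ (ball x ε) :=
        h.measure_le_of_subset_ball hε 2 (closedBall_subset_ball (by linarith))
    _ ≤ _ := by
        push_cast
        gcongr
        exact ball_subset_closedBall

/-- Bounded overlap of the balls in `Metric.exists_disjoint_ball_cover`. -/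
theorem tsum_setLIntegral_ball_le [BorelSpace X] (h : IsDoublingWith μ Cd) {S : Set X}
    (hS : S.Countable) {s : ℝ} (hs : 0 < s) (hd : S.PairwiseDisjoint fun z => ball z (s / 4))
    {W : Set X} (hSW : ∀ z ∈ S, ball z s ⊆ W) (m : Measure X)
    {f : X → ℝ≥0∞} (hf : Measurable f) :
    ∑' z : S, ∫⁻ y in ball (z : X) s, f y ∂m ≤ (Cd : ℝ≥0∞) ^ 4 * ∫⁻ y in W, f y ∂m := by
  have : Countable S := hS
  have hcard (y : X) : ∑' z : S, (ball (z : X) s).indicator 1 y ≤ (Cd : ℝ≥0∞) ^ 4 := by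
    have h0 := h.measure_ball_pos y (r := 2 * s) (by positivity)
    have h1 := h.measure_ball_lt_top y (2 * s)
    rw [← ENNReal.mul_le_mul_iff_left h0.ne' h1.ne, ← ENNReal.tsum_mul_right]
    have hterm (z : S) : (ball (z : X) s).indicator (1 : X → ℝ≥0∞) y * μ (ball y (2 * s)) ≤
        Cd ^ 4 * μ (ball (z : X) (s / 4) ∩ ball y (2 * s)) := by
      by_cases hyz : y ∈ ball (z : X) s
      · have hyz' := mem_ball.1 hyz
        have hsub : ball (z : X) (s / 4) ⊆ ball y (2 * s) :=
          ball_subset_ball' (by rw [dist_comm]; linarith)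
        rw [indicator_of_mem hyz, inter_eq_left.2 hsub, Pi.one_apply, one_mul]
        exact h.measure_le_of_subset_ball (by positivity) 4
          (ball_subset_ball' (by linarith))
      · simp [indicator_of_notMem hyz]
    refine (ENNReal.tsum_le_tsum hterm).trans ?_
    rw [ENNReal.tsum_mul_left]
    gcongr
    refine (tsum_meas_le_meas_iUnion_of_disjoint μ
      (fun z => measurableSet_ball.inter measurableSet_ball) fun a b hab => ?_).trans
      (measure_mono (iUnion_subset fun _ => inter_subset_right))
    exact (hd a.2 b.2 (Subtype.coe_ne_coe.2 hab)).mono inter_subset_left inter_subset_left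
  calc ∑' z : S, ∫⁻ y in ball (z : X) s, f y ∂m
      = ∑' z : S, ∫⁻ y in W, (ball (z : X) s).indicator 1 y * f y ∂m := by
        refine tsum_congr fun z => ?_
        rw [← inter_eq_left.2 (hSW z z.2), ← Measure.restrict_restrict measurableSet_ball,
          ← lintegral_indicator measurableSet_ball, inter_eq_left.2 (hSW z z.2)]
        refine lintegral_congr fun y => ?_
        by_cases hy : y ∈ ball (z : X) s <;> simp [hy]
    _ = ∫⁻ y in W, (∑' z : S, (ball (z : X) s).indicator 1 y) * f y ∂m := by
        simp_rw [← ENNReal.tsum_mul_right]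
        exact (lintegral_tsum fun z =>
          ((measurable_one.indicator measurableSet_ball).mul hf).aemeasurable).symm
    _ ≤ ∫⁻ y in W, (Cd : ℝ≥0∞) ^ 4 * f y ∂m := by
        gcongr with y
        exact hcard y
    _ = _ := lintegral_const_mul _ hf

end IsDoublingWith

section LipConst

variable {X : Type u} [MetricSpace X]

theorem LocallyLipschitzOnSet.locallyLipschitz {v : X → ℝ} (hv : LocallyLipschitzOnSet v univ) :
    LocallyLipschitz v := fun x => by
  obtain ⟨L, hL⟩ := hv (closedBall x 1) isClosed_closedBall isBounded_closedBall (subset_univ _)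
  exact ⟨L, closedBall x 1, closedBall_mem_nhds x one_pos, hL⟩

theorem LocallyLipschitzOnSet.exists_lipConst_le {v : X → ℝ} (hv : LocallyLipschitzOnSet v univ)
    (x : X) (R : ℝ) : ∃ L : ℝ≥0, ∀ y ∈ ball x R, lipConst v y ≤ L := by
  obtain ⟨L, hL⟩ := hv (closedBall x R) isClosed_closedBall isBounded_closedBall (subset_univ _)
  refine ⟨L, fun y hy => ?_⟩
  obtain ⟨δ, hδ, hsub⟩ := Metric.isOpen_iff.1 isOpen_ball y hy
  refine liminf_le_of_frequently_le' (Eventually.frequently ?_)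
  filter_upwards [Ioo_mem_nhdsGT hδ] with r hr
  refine iSup₂_le fun z hz => ENNReal.ofReal_le_of_le_toReal ?_
  rw [ENNReal.coe_toReal, div_le_iff₀ hr.1, ← Real.dist_eq]
  refine (hL.dist_le_mul z (ball_subset_closedBall (hsub (ball_subset_ball hr.2.le hz))) y
    (ball_subset_closedBall hy)).trans ?_
  gcongr
  exact (mem_ball.1 hz).le

theorem LocallyLipschitzOnSet.lipConst_ne_top {v : X → ℝ} (hv : LocallyLipschitzOnSet v univ)
    (x : X) : lipConst v x ≠ ⊤ := by
  obtain ⟨L, hL⟩ := hv.exists_lipConst_le x 1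
  exact ne_top_of_le_ne_top ENNReal.coe_ne_top (hL x (mem_ball_self one_pos))

theorem LocallyLipschitzOnSet.integrableOn_ball [MeasurableSpace X] [BorelSpace X] {μ : Measure X}
    {Cd : ℝ≥0} (h : IsDoublingWith μ Cd) {v : X → ℝ} (hv : LocallyLipschitzOnSet v univ) (x : X)
    (r : ℝ) : IntegrableOn v (ball x r) μ := by
  obtain ⟨L, hL⟩ := hv (closedBall x |r|) isClosed_closedBall isBounded_closedBall (subset_univ _)
  refine Measure.integrableOn_of_bounded (M := |v x| + L * |r|) (h.measure_ball_lt_top x r).ne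
    hv.locallyLipschitz.continuous.measurable.aestronglyMeasurable ?_
  refine ae_restrict_of_forall_mem measurableSet_ball fun y hy => ?_
  have hy' : dist y x ≤ |r| := (mem_ball.1 hy).le.trans (le_abs_self r)
  have h1 := hL.dist_le_mul y hy' x (mem_closedBall_self (abs_nonneg r))
  rw [Real.dist_eq] at h1
  rw [Real.norm_eq_abs]
  have h2 : (L : ℝ) * dist y x ≤ L * |r| := by gcongr
  have h3 := abs_sub_abs_le_abs_sub (v y) (v x)
  linarith

/-- In the definition of `lipConst` only rational radii matter. -/
theorem lipConst_eq_iSup_iInf (v : X → ℝ) (x : X) :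
    lipConst v x = ⨆ n : ℕ, ⨅ (q : ℚ) (_ : 0 < (q : ℝ)) (_ : (q : ℝ) < 1 / ((n : ℝ) + 1)),
      ⨆ y ∈ ball x (q : ℝ), ENNReal.ofReal (|v y - v x| / q) := by
  refine le_antisymm ?_ (iSup_le fun n => ?_)
  · refine le_of_forall_lt fun c hc => ?_
    obtain ⟨c', hcc', hc'⟩ := exists_between hc
    obtain ⟨δ, hδ, hsub⟩ :=
      mem_nhdsGT_iff_exists_Ioo_subset.1 (eventually_lt_of_lt_liminf hc')
    obtain ⟨n, hn⟩ := exists_nat_one_div_lt (show (0 : ℝ) < δ from hδ)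
    refine hcc'.trans_le (le_iSup_of_le n ?_)
    exact le_iInf fun q => le_iInf fun hq => le_iInf fun hqn =>
      le_of_lt (hsub ⟨hq, hqn.trans hn⟩)
  · have hn : (0 : ℝ) < 1 / ((n : ℝ) + 1) := by positivity
    refine le_liminf_of_le (by isBoundedDefault) ?_
    filter_upwards [Ioo_mem_nhdsGT hn] with r hr
    refine le_of_forall_gt fun c hc => ?_
    set N : ℝ≥0∞ := ⨆ y ∈ ball x r, ENNReal.ofReal |v y - v x|
    have hdiv (t : ℝ) (ht : 0 < t) : ⨆ y ∈ ball x t, ENNReal.ofReal (|v y - v x| / t) =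
        (⨆ y ∈ ball x t, ENNReal.ofReal |v y - v x|) / ENNReal.ofReal t := by
      simp_rw [ENNReal.ofReal_div_of_pos ht, ENNReal.iSup_div]
    rw [hdiv r hr.1] at hc
    have hcont : Tendsto (fun t : ℝ => N / ENNReal.ofReal t) (𝓝[<] r)
        (𝓝 (N / ENNReal.ofReal r)) := by
      refine (ENNReal.Tendsto.const_div
        ((ENNReal.continuous_ofReal.tendsto r).mono_left nhdsWithin_le_nhds) ?_)
      left
      exact ENNReal.ofReal_ne_top
    have hev := hcont.eventually (gt_mem_nhds hc)
    obtain ⟨a, ha, hsub⟩ := (mem_nhdsLT_iff_exists_Ioo_subset' hr.1).1 hev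
    obtain ⟨q, hq1, hq2⟩ := exists_rat_btwn (max_lt hr.1 ha)
    have hq0 : (0 : ℝ) < q := (le_max_left _ _).trans_lt hq1
    refine lt_of_le_of_lt (iInf_le_of_le q (iInf_le_of_le hq0
      (iInf_le_of_le (hq2.trans hr.2) ?_))) (hsub ⟨(le_max_right _ _).trans_lt hq1, hq2⟩)
    rw [hdiv q hq0]
    gcongr
    exact biSup_mono fun y hy => ball_subset_ball hq2.le hy

theorem measurable_lipConst [MeasurableSpace X] [BorelSpace X] {v : X → ℝ} (hv : Continuous v) :
    Measurable (lipConst v) := by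
  have : lipConst v = fun x => ⨆ n : ℕ, ⨅ (q : ℚ) (_ : 0 < (q : ℝ))
      (_ : (q : ℝ) < 1 / ((n : ℝ) + 1)), ⨆ y ∈ ball x (q : ℝ),
        ENNReal.ofReal (|v y - v x| / q) := funext (lipConst_eq_iSup_iInf v)
  rw [this]
  refine .iSup fun n => .iInf fun q => .iInf fun hq => .iInf fun _ => ?_
  refine LowerSemicontinuous.measurable fun x c hc => ?_
  obtain ⟨y, hy⟩ := lt_iSup_iff.1 hc
  obtain ⟨hyx, hy⟩ := lt_iSup_iff.1 hy
  have hcont : Continuous fun z => ENNReal.ofReal (|v y - v z| / q) := by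
    refine ENNReal.continuous_ofReal.comp ?_
    fun_prop
  filter_upwards [hcont.continuousAt.eventually (lt_mem_nhds hy),
    isOpen_ball.mem_nhds (mem_ball_comm.1 hyx)] with z hz hyz
  exact hz.trans_le (le_iSup₂_of_le y (mem_ball_comm.1 hyz) le_rfl)

end LipConst

section UpperGradient

variable {X : Type u} [MetricSpace X]

/-- Along a `1`-Lipschitz curve the derivative of `v` is dominated by `lipConst v`. -/
theorem ofReal_abs_deriv_le_lipConst {v : X → ℝ} {γ : ℝ → X} {s : Set ℝ} {t d : ℝ}
    (hγ : LipschitzOnWith 1 γ s) (hs : s ∈ 𝓝 t) (hd : HasDerivAt (v ∘ γ) d t) :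
    ENNReal.ofReal |d| ≤ lipConst v (γ t) := by
  have key (l : ℝ) (hl : l ∈ Ioo (0 : ℝ) 1) : ENNReal.ofReal (l * |d|) ≤ lipConst v (γ t) := by
    have h0 : Tendsto (fun r : ℝ => l * r) (𝓝[>] 0) (𝓝[≠] 0) := by
      refine tendsto_nhdsWithin_iff.2 ⟨?_, ?_⟩
      · have : Tendsto (fun r : ℝ => l * r) (𝓝 0) (𝓝 (l * 0)) := by
          exact (continuous_const.mul continuous_id).tendsto 0
        rw [mul_zero] at this
        exact this.mono_left nhdsWithin_le_nhds
      · filter_upwards [self_mem_nhdsWithin] with r (hr : 0 < r)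
        exact (mul_pos hl.1 hr).ne'
    have h1 := (((hasDerivAt_iff_tendsto_slope_zero.1 hd).comp h0).abs.const_mul l)
    have h2 := (ENNReal.continuous_ofReal.tendsto _).comp h1
    rw [← h2.liminf_eq]
    refine liminf_le_liminf ?_
    have h3 : ∀ᶠ r in 𝓝[>] (0 : ℝ), t + l * r ∈ s := by
      have : Tendsto (fun r : ℝ => t + l * r) (𝓝[>] 0) (𝓝 t) := by
        simpa using tendsto_const_nhds.add (h0.mono_right nhdsWithin_le_nhds)
      exact this hs
    filter_upwards [self_mem_nhdsWithin, h3] with r (hr : 0 < r) hrs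
    have hdist := hγ.dist_le_mul _ hrs _ (mem_of_mem_nhds hs)
    rw [NNReal.coe_one, one_mul, Real.dist_eq, add_sub_cancel_left,
      abs_of_pos (mul_pos hl.1 hr)] at hdist
    refine le_iSup₂_of_le (γ (t + l * r)) (mem_ball.2 (hdist.trans_lt ?_)) ?_
    · nlinarith [hl.2]
    · refine ENNReal.ofReal_le_ofReal (le_of_eq ?_)
      simp only [Function.comp_apply, smul_eq_mul, abs_mul, abs_inv, abs_of_pos hl.1,
        abs_of_pos hr]
      field_simp [hl.1.ne']
  have hlim : Tendsto (fun l : ℝ => ENNReal.ofReal (l * |d|)) (𝓝[<] 1)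
      (𝓝 (ENNReal.ofReal |d|)) := by
    have : Tendsto (fun l : ℝ => ENNReal.ofReal (l * |d|)) (𝓝 1)
        (𝓝 (ENNReal.ofReal (1 * |d|))) :=
      (ENNReal.continuous_ofReal.comp (continuous_id.mul continuous_const)).tendsto 1
    rw [one_mul] at this
    exact this.mono_left nhdsWithin_le_nhds
  refine le_of_tendsto hlim ?_
  filter_upwards [Ioo_mem_nhdsLT (zero_lt_one' ℝ)] with l hl using key l hl

theorem LocallyLipschitzOnSet.isUpperGradientOf_lipConst [MeasurableSpace X] [BorelSpace X]
    {v : X → ℝ} (hv : LocallyLipschitzOnSet v univ) :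
    IsUpperGradientOf (fun x => (lipConst v x).toReal) v := by
  intro L hL γ hγ
  have hbdd : γ '' Icc 0 L ⊆ ball (γ 0) (L + 1) := by
    rintro _ ⟨t, ht, rfl⟩
    have := hγ.dist_le_mul t ht 0 ⟨le_rfl, hL⟩
    rw [NNReal.coe_one, one_mul, Real.dist_eq, sub_zero, abs_of_nonneg ht.1] at this
    exact mem_ball.2 (by linarith [ht.2])
  obtain ⟨K, hK⟩ := hv (closedBall (γ 0) (L + 1)) isClosed_closedBall isBounded_closedBall
    (subset_univ _)
  obtain ⟨K', hK'⟩ := hv.exists_lipConst_le (γ 0) (L + 1)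
  have hcomp : LipschitzOnWith K (v ∘ γ) (Icc 0 L) := by
    simpa using (hK.mono (hbdd.trans ball_subset_closedBall)).comp hγ (mapsTo_image _ _)
  have hac : AbsolutelyContinuousOnInterval (v ∘ γ) 0 L :=
    LipschitzOnWith.absolutelyContinuousOnInterval (by rwa [uIcc_of_le hL])
  have hint := hac.intervalIntegrable_deriv
  have hgint : IntervalIntegrable (fun t => (lipConst v (γ t)).toReal) volume 0 L := by
    rw [intervalIntegrable_iff_integrableOn_Icc_of_le hL]
    have hmeas : AEMeasurable γ (volume.restrict (Icc 0 L)) :=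
      hγ.continuousOn.aemeasurable measurableSet_Icc
    refine Integrable.of_bound (((measurable_lipConst
      hv.locallyLipschitz.continuous).ennreal_toReal.comp_aemeasurable hmeas).aestronglyMeasurable)
      K' ?_
    · refine ae_restrict_of_forall_mem measurableSet_Icc fun t ht => ?_
      rw [Real.norm_of_nonneg ENNReal.toReal_nonneg]
      exact ENNReal.toReal_le_of_le_ofReal K'.2
        (by simpa using hK' _ (hbdd (mem_image_of_mem γ ht)))
  rw [abs_sub_comm]
  change |(v ∘ γ) L - (v ∘ γ) 0| ≤ _
  rw [← hac.integral_deriv_eq_sub]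
  refine (intervalIntegral.abs_integral_le_integral_abs hL).trans
    (intervalIntegral.integral_mono_ae_restrict hL hint.abs hgint ?_)
  rw [EventuallyLE, ← restrict_Ioo_eq_restrict_Icc]
  filter_upwards [(hcomp.mono Ioo_subset_Icc_self).ae_differentiableWithinAt_real
    measurableSet_Ioo, ae_restrict_mem measurableSet_Ioo] with t ht htm
  have := ofReal_abs_deriv_le_lipConst (hγ.mono Ioo_subset_Icc_self) (Ioo_mem_nhds htm.1 htm.2)
    (ht.differentiableAt (Ioo_mem_nhds htm.1 htm.2)).hasDerivAt
  exact (ENNReal.ofReal_le_iff_le_toReal (hv.lipConst_ne_top _)).1 this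

end UpperGradient

section Averages

variable {X : Type u} [MeasurableSpace X] {μ : Measure X}

theorem ofReal_abs_setAverage_sub_mul_le {f : X → ℝ} {S : Set X} (hf : IntegrableOn f S μ)
    (h0 : μ S ≠ 0) (h1 : μ S ≠ ⊤) (c : ℝ) :
    ENNReal.ofReal |(⨍ y in S, f y ∂μ) - c| * μ S ≤ ∫⁻ y in S, ENNReal.ofReal |f y - c| ∂μ := by
  have hc : IntegrableOn (fun _ => c) S μ := integrableOn_const h1
  have hpos : 0 < μ.real S := ENNReal.toReal_pos h0 h1
  have heq : ((⨍ y in S, f y ∂μ) - c) * μ.real S = ∫ y in S, (f y - c) ∂μ := by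
    rw [integral_sub hf hc, setIntegral_const, setAverage_eq, smul_eq_mul, smul_eq_mul]
    field_simp
  have hle := enorm_integral_le_lintegral_enorm (μ := μ.restrict S) (fun y => f y - c)
  simp only [Real.enorm_eq_ofReal_abs] at hle
  rwa [← heq, abs_mul, abs_of_pos hpos, ENNReal.ofReal_mul (abs_nonneg _),
    ofReal_measureReal h1] at hle

end Averages

section Poincare

variable {X : Type u} [MetricSpace X] [MeasurableSpace X] [BorelSpace X] {μ : Measure X}
  {Cd : ℝ≥0} {CP : ℝ}

theorem SupportsPoincare.lintegral_ball_le (hP : SupportsPoincare μ CP)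
    (h : IsDoublingWith μ Cd) (hCP : 0 < CP) {v : X → ℝ} (hv : LocallyLipschitzOnSet v univ) (x : X)
    {r : ℝ} (hr : 0 < r) :
    ∫⁻ y in ball x r, ENNReal.ofReal |v y - ⨍ z in ball x r, v z ∂μ| ∂μ ≤
      ENNReal.ofReal (CP * r) * ∫⁻ y in ball x r, lipConst v y ∂μ := by
  have hm := measurable_lipConst hv.locallyLipschitz.continuous
  have hpos : 0 < μ.real (ball x r) :=
    ENNReal.toReal_pos (h.measure_ball_pos x hr).ne' (h.measure_ball_lt_top x r).ne
  have hmain := hP v hv (fun x => (lipConst v x).toReal) (fun _ => ENNReal.toReal_nonneg)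
    hm.ennreal_toReal hv.isUpperGradientOf_lipConst x r hr
  set c := ⨍ z in ball x r, v z ∂μ
  rw [setAverage_eq, setAverage_eq, smul_eq_mul, smul_eq_mul, mul_left_comm] at hmain
  have hle := le_of_mul_le_mul_left hmain (inv_pos.2 hpos)
  have hint1 : IntegrableOn (fun y => |v y - c|) (ball x r) μ :=
    ((hv.integrableOn_ball h x r).sub (integrableOn_const (h.measure_ball_lt_top x r).ne)).abs
  obtain ⟨K, hK⟩ := hv.exists_lipConst_le x r
  have hint2 : IntegrableOn (fun y => (lipConst v y).toReal) (ball x r) μ := by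
    refine Measure.integrableOn_of_bounded (M := K) (h.measure_ball_lt_top x r).ne
      hm.ennreal_toReal.aestronglyMeasurable ?_
    refine ae_restrict_of_forall_mem measurableSet_ball fun t ht => ?_
    rw [Real.norm_of_nonneg ENNReal.toReal_nonneg]
    exact ENNReal.toReal_le_of_le_ofReal K.2 (by simpa using hK _ ht)
  rw [← ofReal_integral_eq_lintegral_ofReal hint1 (.of_forall fun _ => abs_nonneg _)]
  refine (ENNReal.ofReal_le_ofReal hle).trans (le_of_eq ?_)
  rw [ENNReal.ofReal_mul (by positivity), ofReal_integral_eq_lintegral_ofReal hint2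
    (.of_forall fun _ => ENNReal.toReal_nonneg)]
  simp_rw [ENNReal.ofReal_toReal (hv.lipConst_ne_top _)]

/-- The Poincaré inequality improved on small sets: the oscillation over `A ∩ B(x,r)` is
controlled with a constant that becomes small with `2⁻ⁿ` and the proportion of `A` in the ball. -/
theorem SupportsPoincare.lintegral_inter_ball_le (hP : SupportsPoincare μ CP)
    (h : IsDoublingWith μ Cd) (hCP : 0 < CP) {v : X → ℝ} (hv : LocallyLipschitzOnSet v univ)
    (A : Set X) (x : X) {r : ℝ} (hr : 0 < r) (n : ℕ) :
    ∫⁻ y in A ∩ ball x r, ENNReal.ofReal |v y - ⨍ z in ball x (2 * r), v z ∂μ| ∂μ ≤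
      (Cd : ℝ≥0∞) ^ 4 * (ENNReal.ofReal (CP * (r / 2 ^ n)) +
        (Cd : ℝ≥0∞) ^ (n + 1) * ENNReal.ofReal (CP * (2 * r)) *
          (μ (A ∩ ball x r) / μ (ball x r))) *
      ∫⁻ y in ball x (2 * r), lipConst v y ∂μ := by
  have := h.secondCountableTopology
  set s := r / 2 ^ n with hs
  have hs0 : 0 < s := by positivity
  have hsr : s ≤ r := div_le_self hr.le (one_le_pow₀ one_le_two)
  set B := ball x r
  set c := ⨍ z in ball x (2 * r), v z ∂μ
  set G := ∫⁻ y in ball x (2 * r), lipConst v y ∂μ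
  set m := μ.restrict (A ∩ B) with hm
  have hB0 : μ B ≠ 0 := (h.measure_ball_pos x hr).ne'
  have hB1 : μ B ≠ ⊤ := (h.measure_ball_lt_top x r).ne
  set k : ℝ≥0∞ := (Cd : ℝ≥0∞) ^ (n + 1) * (ENNReal.ofReal (CP * (2 * r)) * G) / μ B with hk
  have hlm := measurable_lipConst hv.locallyLipschitz.continuous
  obtain ⟨S, hST, hd, hc⟩ := Metric.exists_disjoint_ball_cover B hs0
  have hScount : S.Countable := hd.countable_of_isOpen (fun _ _ => isOpen_ball)
    (fun z _ => nonempty_ball.2 (by positivity))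
  have : Countable S := hScount
  have hsub : ∀ z ∈ S, ball z s ⊆ ball x (2 * r) := fun z hz =>
    ball_subset_ball' (by linarith [mem_ball.1 (hST hz)])
  have havg (z : X) (hz : z ∈ S) :
      ENNReal.ofReal |(⨍ y in ball z s, v y ∂μ) - c| ≤ k := by
    rw [hk, ENNReal.le_div_iff_mul_le (.inl hB0) (.inl hB1)]
    have hBz : μ B ≤ (Cd : ℝ≥0∞) ^ (n + 1) * μ (ball z s) := by
      refine h.measure_le_of_subset_ball hs0 (n + 1) (ball_subset_ball' ?_)
      have : (2 : ℝ) ^ (n + 1) * s = 2 * r := by rw [hs]; field_simp; ring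
      rw [this, dist_comm]
      linarith [mem_ball.1 (hST hz)]
    calc ENNReal.ofReal |(⨍ y in ball z s, v y ∂μ) - c| * μ B
        ≤ ENNReal.ofReal |(⨍ y in ball z s, v y ∂μ) - c| *
          ((Cd : ℝ≥0∞) ^ (n + 1) * μ (ball z s)) := by gcongr
      _ = (Cd : ℝ≥0∞) ^ (n + 1) *
          (ENNReal.ofReal |(⨍ y in ball z s, v y ∂μ) - c| * μ (ball z s)) := by ring
      _ ≤ (Cd : ℝ≥0∞) ^ (n + 1) * ∫⁻ y in ball z s, ENNReal.ofReal |v y - c| ∂μ := by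
          gcongr
          exact ofReal_abs_setAverage_sub_mul_le (hv.integrableOn_ball h z s)
            (h.measure_ball_pos z hs0).ne' (h.measure_ball_lt_top z s).ne c
      _ ≤ (Cd : ℝ≥0∞) ^ (n + 1) * ∫⁻ y in ball x (2 * r), ENNReal.ofReal |v y - c| ∂μ := by
          gcongr
          exact hsub z hz
      _ ≤ _ := by
          gcongr
          exact hP.lintegral_ball_le h hCP hv x (by positivity)
  have hball (z : S) : ∫⁻ y in ball (z : X) s, ENNReal.ofReal |v y - c| ∂m ≤
      ENNReal.ofReal (CP * s) * (∫⁻ y in ball (z : X) s, lipConst v y ∂μ) +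
        k * ∫⁻ _ in ball (z : X) s, 1 ∂m := by
    calc ∫⁻ y in ball (z : X) s, ENNReal.ofReal |v y - c| ∂m
        ≤ ∫⁻ y in ball (z : X) s,
            (ENNReal.ofReal |v y - ⨍ w in ball (z : X) s, v w ∂μ| + k) ∂m := by
          refine lintegral_mono fun y => ?_
          refine le_trans ?_ (add_le_add_right (havg z z.2) _)
          rw [← ENNReal.ofReal_add (abs_nonneg _) (abs_nonneg _)]
          exact ENNReal.ofReal_le_ofReal (abs_sub_le _ _ _)
      _ = (∫⁻ y in ball (z : X) s, ENNReal.ofReal |v y - ⨍ w in ball (z : X) s, v w ∂μ| ∂m) +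
            k * ∫⁻ _ in ball (z : X) s, 1 ∂m := by
          rw [lintegral_add_right _ measurable_const, lintegral_const, setLIntegral_one,
            Measure.restrict_apply_univ]
      _ ≤ (∫⁻ y in ball (z : X) s, ENNReal.ofReal |v y - ⨍ w in ball (z : X) s, v w ∂μ| ∂μ) +
            k * ∫⁻ _ in ball (z : X) s, 1 ∂m := by
          gcongr
          exact Measure.restrict_le_self
      _ ≤ _ := by
          gcongr
          exact hP.lintegral_ball_le h hCP hv z hs0
  calc ∫⁻ y, ENNReal.ofReal |v y - c| ∂m
      ≤ ∫⁻ y in ⋃ z : S, ball (z : X) s, ENNReal.ofReal |v y - c| ∂m := by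
        rw [hm, Measure.restrict_restrict (MeasurableSet.iUnion fun _ => measurableSet_ball)]
        refine lintegral_mono_set fun y hy => ⟨?_, hy⟩
        obtain ⟨z, hz, hyz⟩ := mem_iUnion₂.1 (hc hy.2)
        exact mem_iUnion.2 ⟨⟨z, hz⟩, hyz⟩
    _ ≤ ∑' z : S, ∫⁻ y in ball (z : X) s, ENNReal.ofReal |v y - c| ∂m :=
        lintegral_iUnion_le _ _
    _ ≤ ∑' z : S, (ENNReal.ofReal (CP * s) * (∫⁻ y in ball (z : X) s, lipConst v y ∂μ) +
        k * ∫⁻ _ in ball (z : X) s, 1 ∂m) := ENNReal.tsum_le_tsum hball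
    _ = ENNReal.ofReal (CP * s) * (∑' z : S, ∫⁻ y in ball (z : X) s, lipConst v y ∂μ) +
        k * ∑' z : S, ∫⁻ _ in ball (z : X) s, 1 ∂m := by
        rw [ENNReal.tsum_add, ENNReal.tsum_mul_left, ENNReal.tsum_mul_left]
    _ ≤ ENNReal.ofReal (CP * s) * ((Cd : ℝ≥0∞) ^ 4 * G) +
        k * ((Cd : ℝ≥0∞) ^ 4 * ∫⁻ _ in univ, 1 ∂m) := by
        gcongr
        · exact h.tsum_setLIntegral_ball_le hScount hs0 hd hsub μ hlm
        · exact h.tsum_setLIntegral_ball_le hScount hs0 hd (fun _ _ => subset_univ _) m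
            measurable_const
    _ = _ := by
        rw [setLIntegral_one, hm, Measure.restrict_apply_univ, hk, div_eq_mul_inv, div_eq_mul_inv]
        ring

end Poincare

section Variation

variable {X : Type u} [MetricSpace X] [MeasurableSpace X]

/-- The asymptotic variation on `W` of a sequence of functions. -/
def asympVar (μ : Measure X) (v : ℕ → X → ℝ) (W : Set X) : ℝ≥0∞ :=
  Filter.liminf (fun i => ∫⁻ x in W, lipConst (v i) x ∂μ) atTop

theorem tsum_asympVar_le {ι : Type*} [Countable ι] (μ : Measure X) (v : ℕ → X → ℝ)
    {B : ι → Set X} (hB : ∀ i, MeasurableSet (B i)) (hd : Pairwise (Function.onFun Disjoint B)) :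
    ∑' i, asympVar μ v (B i) ≤ asympVar μ v univ := by
  let _ : MeasurableSpace ι := ⊤
  rw [← lintegral_count]
  refine (lintegral_liminf_le fun _ => measurable_from_top).trans
    (liminf_le_liminf (.of_forall fun n => ?_))
  rw [lintegral_count, ← lintegral_iUnion hB hd]
  exact lintegral_mono_set (subset_univ _)

variable [BorelSpace X] {μ : Measure X} {Cd : ℝ≥0} {CP : ℝ} {v : ℕ → X → ℝ} {u : X → ℝ}

theorem TendstoL1loc.integrableOn_ball (hT : TendstoL1loc μ v u univ) (h : IsDoublingWith μ Cd)
    (hv : ∀ i, LocallyLipschitzOnSet (v i) univ) (hu : Measurable u) (x : X) (r : ℝ) :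
    IntegrableOn u (ball x r) μ := by
  have hlim := hT (closedBall x r) isClosed_closedBall isBounded_closedBall (subset_univ _)
  obtain ⟨i, hi⟩ := (hlim.eventually (gt_mem_nhds ENNReal.zero_lt_top)).exists
  have hsub : IntegrableOn (fun y => v i y - u y) (ball x r) μ := by
    refine ⟨((hv i).locallyLipschitz.continuous.measurable.sub hu).aestronglyMeasurable, ?_⟩
    rw [HasFiniteIntegral]
    simp_rw [Real.enorm_eq_ofReal_abs]
    exact (lintegral_mono_set ball_subset_closedBall).trans_lt hi
  exact (((hv i).integrableOn_ball h x r).sub hsub).congr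
    (.of_forall fun y => sub_sub_cancel (v i y) (u y))

theorem TendstoL1loc.lintegral_sub_average_le (hT : TendstoL1loc μ v u univ)
    (h : IsDoublingWith μ Cd) (hv : ∀ i, LocallyLipschitzOnSet (v i) univ) (hu : Measurable u)
    {S : Set X} {x : X} {R : ℝ} (hR : 0 < R) (hS : S ⊆ ball x R) {c : ℝ≥0∞} (hc : c ≠ ⊤)
    (hle : ∀ i, ∫⁻ y in S, ENNReal.ofReal |v i y - ⨍ z in ball x R, v i z ∂μ| ∂μ ≤
      c * ∫⁻ y in ball x R, lipConst (v i) y ∂μ) :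
    ∫⁻ y in S, ENNReal.ofReal |u y - ⨍ z in ball x R, u z ∂μ| ∂μ ≤
      c * asympVar μ v (ball x R) := by
  set a := ⨍ z in ball x R, u z ∂μ
  set e : ℕ → ℝ≥0∞ := fun i => ∫⁻ y in closedBall x R, ENNReal.ofReal |v i y - u y| ∂μ
  have he : Tendsto e atTop (𝓝 0) :=
    hT (closedBall x R) isClosed_closedBall isBounded_closedBall (subset_univ _)
  have hSb : μ S ≤ μ (ball x R) := measure_mono hS
  have hvm (i : ℕ) : Measurable (v i) := (hv i).locallyLipschitz.continuous.measurable
  have hui := hT.integrableOn_ball h hv hu x R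
  have hstep (i : ℕ) : ∫⁻ y in S, ENNReal.ofReal |u y - a| ∂μ ≤
      c * (∫⁻ y in ball x R, lipConst (v i) y ∂μ) + (e i + e i) := by
    set b := ⨍ z in ball x R, v i z ∂μ
    have hab : ENNReal.ofReal |b - a| * μ (ball x R) ≤ e i := by
      have hvi := (hv i).integrableOn_ball h x R
      have h0 := (h.measure_ball_pos x hR).ne'
      have h1 := (h.measure_ball_lt_top x R).ne
      have hsub := ofReal_abs_setAverage_sub_mul_le (hvi.sub hui) h0 h1 0
      have heq : ⨍ z in ball x R, (v i - u) z ∂μ = b - a := by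
        simp only [Pi.sub_apply]
        rw [setAverage_eq, integral_sub hvi hui, smul_sub, ← setAverage_eq, ← setAverage_eq]
      rw [heq, sub_zero] at hsub
      refine hsub.trans ?_
      simp only [Pi.sub_apply, sub_zero]
      exact lintegral_mono_set ball_subset_closedBall
    calc ∫⁻ y in S, ENNReal.ofReal |u y - a| ∂μ
        ≤ ∫⁻ y in S, (ENNReal.ofReal |v i y - b| +
            (ENNReal.ofReal |v i y - u y| + ENNReal.ofReal |b - a|)) ∂μ := by
          refine lintegral_mono fun y => ?_
          rw [← ENNReal.ofReal_add (abs_nonneg _) (abs_nonneg _),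
            ← ENNReal.ofReal_add (abs_nonneg _) (by positivity)]
          refine ENNReal.ofReal_le_ofReal ?_
          have h1 := abs_sub_le (u y) (v i y) a
          have h2 := abs_sub_le (v i y) b a
          rw [abs_sub_comm (u y) (v i y)] at h1
          linarith
      _ = (∫⁻ y in S, ENNReal.ofReal |v i y - b| ∂μ) +
            ((∫⁻ y in S, ENNReal.ofReal |v i y - u y| ∂μ) + ENNReal.ofReal |b - a| * μ S) := by
          rw [lintegral_add_left, lintegral_add_left, setLIntegral_const]
          · exact ((hvm i).sub hu).abs.ennreal_ofReal
          · exact ((hvm i).sub measurable_const).abs.ennreal_ofReal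
      _ ≤ _ := by
          gcongr
          · exact hle i
          · exact lintegral_mono_set (hS.trans ball_subset_closedBall)
          · exact (by gcongr : _ ≤ ENNReal.ofReal |b - a| * μ (ball x R)).trans hab
  set I := ∫⁻ y in S, ENNReal.ofReal |u y - a| ∂μ
  have hlim : Tendsto (fun i => I - (e i + e i)) atTop (𝓝 I) := by
    have := ENNReal.Tendsto.sub (tendsto_const_nhds (x := I)) (he.add he)
      (.inr (by simp))
    simpa using this
  rw [asympVar, ← ENNReal.liminf_const_mul_of_ne_top hc, ← hlim.liminf_eq]
  exact liminf_le_liminf (.of_forall fun i => tsub_le_iff_right.2 (hstep i))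

/-- Finiteness almost everywhere of the restricted maximal function of the variation. -/
theorem ae_exists_asympVar_ball_le (h : IsDoublingWith μ Cd) (hV : asympVar μ v univ ≠ ⊤) :
    ∀ᵐ x ∂μ, ∃ K : ℕ, ∀ r ∈ Ioc (0 : ℝ) 1, asympVar μ v (ball x r) ≤ K * μ (ball x r) := by
  have := h.secondCountableTopology
  have hbad (K : ℕ) :
      K * μ {x | ¬ ∃ K : ℕ, ∀ r ∈ Ioc (0 : ℝ) 1, asympVar μ v (ball x r) ≤ K * μ (ball x r)} ≤
        (Cd : ℝ≥0∞) ^ 2 * asympVar μ v univ := by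
    set E := {x | ¬ ∃ K : ℕ, ∀ r ∈ Ioc (0 : ℝ) 1, asympVar μ v (ball x r) ≤ K * μ (ball x r)}
    have hE : ∀ x : E, ∃ r ∈ Ioc (0 : ℝ) 1,
        (K : ℝ≥0∞) * μ (ball (x : X) r) < asympVar μ v (ball x r) := by
      intro x
      by_contra! hx
      exact x.2 ⟨K, hx⟩
    choose r hr hrK using hE
    obtain ⟨S, -, hd, hc⟩ := Vitali.exists_disjoint_subfamily_covering_enlargement_ball
      (univ : Set E) (fun x => (x : X)) r 1 (fun x _ => (hr x).2) 4 (by norm_num)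
    have hcount : S.Countable := hd.countable_of_isOpen (fun _ _ => isOpen_ball)
      (fun z _ => nonempty_ball.2 (hr z).1)
    have : Countable S := hcount
    have hcover : E ⊆ ⋃ z ∈ S, ball ((z : E) : X) (4 * r z) := fun x hx => by
      obtain ⟨b, hb, hxb⟩ := hc ⟨x, hx⟩ (mem_univ _)
      exact mem_biUnion hb (hxb (mem_ball_self (hr _).1))
    calc K * μ E ≤ K * ∑' z : S, μ (ball ((z : E) : X) (4 * r z)) := by
          gcongr
          exact (measure_mono hcover).trans (measure_biUnion_le μ hcount _)
      _ ≤ K * ∑' z : S, (Cd : ℝ≥0∞) ^ 2 * μ (ball ((z : E) : X) (r z)) := by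
          gcongr with z
          exact h.measure_le_of_subset_ball (hr z).1 2 (ball_subset_ball (by norm_num))
      _ = (Cd : ℝ≥0∞) ^ 2 * ∑' z : S, K * μ (ball ((z : E) : X) (r z)) := by
          rw [ENNReal.tsum_mul_left, ENNReal.tsum_mul_left]
          ring
      _ ≤ (Cd : ℝ≥0∞) ^ 2 * ∑' z : S, asympVar μ v (ball ((z : E) : X) (r z)) := by
          gcongr with z
          exact (hrK z).le
      _ ≤ _ := by
          gcongr
          exact tsum_asympVar_le μ v (fun _ => measurableSet_ball)
            fun a b hab => hd a.2 b.2 (Subtype.coe_ne_coe.2 hab)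
  rw [ae_iff]
  by_contra hne
  have hfin : (Cd : ℝ≥0∞) ^ 2 * asympVar μ v univ ≠ ⊤ := by finiteness
  obtain ⟨K, hK⟩ := ENNReal.exists_nat_mul_gt hne hfin
  exact absurd (hbad K) (not_le.2 hK)

end Variation

section Pointwise

variable {X : Type u} [MetricSpace X] [MeasurableSpace X] {μ : Measure X} {Cd : ℝ≥0} {u : X → ℝ}

theorem abs_setAverage_ball_sub_le (h : IsDoublingWith μ Cd) {x : X}
    (hint : ∀ r, IntegrableOn u (ball x r) μ) {C : ℝ≥0}
    (hosc : ∀ r ∈ Ioc (0 : ℝ) (1 / 2),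
      ∫⁻ y in ball x r, ENNReal.ofReal |u y - ⨍ z in ball x (2 * r), u z ∂μ| ∂μ ≤
        C * (ENNReal.ofReal r * μ (ball x r)))
    (hleb : Tendsto (fun r => ⨍ y in closedBall x r, u y ∂μ) (𝓝[>] (0 : ℝ)) (𝓝 (u x)))
    {r : ℝ} (hr : r ∈ Ioc (0 : ℝ) 1) :
    |(⨍ y in ball x r, u y ∂μ) - u x| ≤ C * r := by
  have hr0 := hr.1
  set f : ℕ → ℝ := fun k => ⨍ y in ball x (r / 2 ^ k), u y ∂μ
  set g : ℕ → ℝ := fun k => ⨍ y in closedBall x (r / 2 ^ (k + 2)), u y ∂μ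
  have hosc' (k : ℕ) : ∫⁻ y in ball x (r / 2 ^ (k + 1)), ENNReal.ofReal |u y - f k| ∂μ ≤
      C * (ENNReal.ofReal (r / 2 ^ (k + 1)) * μ (ball x (r / 2 ^ (k + 1)))) := by
    have h2 : 2 * (r / 2 ^ (k + 1)) = r / 2 ^ k := by field_simp; ring
    have := hosc (r / 2 ^ (k + 1)) ⟨by positivity, ?_⟩
    · rwa [h2] at this
    · rw [div_le_div_iff₀ (by positivity) two_pos, pow_succ]
      nlinarith [hr.2, one_le_pow₀ (one_le_two (α := ℝ)) (n := k)]
  have hcmp {S : Set X} {k : ℕ} {c : ℝ≥0} (hS : S ⊆ ball x (r / 2 ^ (k + 1))) (h0 : μ S ≠ 0)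
      (hc : μ (ball x (r / 2 ^ (k + 1))) ≤ c * μ S) :
      |(⨍ y in S, u y ∂μ) - f k| ≤ C * (r / 2 ^ (k + 1)) * c := by
    have h1 : μ S ≠ ⊤ := ((measure_mono hS).trans_lt (h.measure_ball_lt_top x _)).ne
    have key : ENNReal.ofReal |(⨍ y in S, u y ∂μ) - f k| * μ S ≤
        ENNReal.ofReal (C * (r / 2 ^ (k + 1)) * c) * μ S := by
      calc _ ≤ ∫⁻ y in S, ENNReal.ofReal |u y - f k| ∂μ :=
            ofReal_abs_setAverage_sub_mul_le ((hint _).mono_set hS) h0 h1 _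
        _ ≤ C * (ENNReal.ofReal (r / 2 ^ (k + 1)) * μ (ball x (r / 2 ^ (k + 1)))) :=
            (lintegral_mono_set hS).trans (hosc' k)
        _ ≤ C * (ENNReal.ofReal (r / 2 ^ (k + 1)) * (c * μ S)) := by gcongr
        _ = _ := by
            rw [ENNReal.ofReal_mul (by positivity), ENNReal.ofReal_mul C.coe_nonneg,
              ENNReal.ofReal_coe_nnreal, ENNReal.ofReal_coe_nnreal]
            ring
    rw [ENNReal.mul_le_mul_iff_left h0 h1] at key
    exact (ENNReal.ofReal_le_ofReal_iff (by positivity)).1 key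
  have hstep (k : ℕ) : dist (f k) (f (k + 1)) ≤ C * r / 2 / 2 ^ k := by
    rw [dist_comm, Real.dist_eq]
    refine (hcmp (S := ball x (r / 2 ^ (k + 1))) (c := 1) subset_rfl
      (h.measure_ball_pos x (by positivity)).ne' (by simp)).trans (le_of_eq ?_)
    rw [NNReal.coe_one, pow_succ]
    field_simp
  have hgf (k : ℕ) : |g k - f k| ≤ C * (r / 2 ^ (k + 1)) * Cd := by
    have h2 : 2 * (r / 2 ^ (k + 2)) = r / 2 ^ (k + 1) := by field_simp; ring
    refine hcmp ((closedBall_subset_ball ?_)) ?_ ?_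
    · rw [← h2]
      linarith [show 0 < r / 2 ^ (k + 2) by positivity]
    · exact ((h.measure_ball_pos x (r := r / 2 ^ (k + 2)) (by positivity)).trans_le
        (measure_mono ball_subset_closedBall)).ne'
    · rw [← h2]
      refine (h x (r / 2 ^ (k + 2)) (by positivity)).2.1.trans ?_
      gcongr
      exact ball_subset_closedBall
  have hpow (m : ℕ) : Tendsto (fun k : ℕ => r / 2 ^ (k + m)) atTop (𝓝 0) := by
    have h1 : Tendsto (fun k : ℕ => r / 2 ^ k) atTop (𝓝 0) :=
      tendsto_const_nhds.div_atTop (tendsto_pow_atTop_atTop_of_one_lt one_lt_two)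
    exact h1.comp (tendsto_add_atTop_nat m)
  have hg : Tendsto g atTop (𝓝 (u x)) := hleb.comp (tendsto_nhdsWithin_iff.2
    ⟨hpow 2, .of_forall fun k => mem_Ioi.2 (by positivity)⟩)
  have hd : Tendsto (fun k => g k - f k) atTop (𝓝 0) := by
    refine squeeze_zero_norm hgf ?_
    simpa using ((hpow 1).const_mul (C : ℝ)).mul_const (Cd : ℝ)
  have hf : Tendsto f atTop (𝓝 (u x)) := by simpa using hg.sub hd
  have := dist_le_of_le_geometric_two_of_tendsto₀ hstep hf
  rw [Real.dist_eq] at this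
  simpa [f] using this

end Pointwise

/-- Oscillation bounds that improve on small sets force `u - u x` to be `o(r)` in mean on sets of
density zero at `x`. -/
theorem tendsto_lintegral_inter_ball_div {X : Type u} [MetricSpace X] [MeasurableSpace X]
    {μ : Measure X} {Cd : ℝ≥0} {u : X → ℝ} (h : IsDoublingWith μ Cd) {x : X}
    {p q : ℕ → ℝ≥0∞} {C : ℝ≥0} (hp : Tendsto p atTop (𝓝 0)) (hq : ∀ n, q n ≠ ⊤)
    (hosc : ∀ (A : Set X), ∀ r ∈ Ioc (0 : ℝ) (1 / 2), ∀ n : ℕ,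
      ∫⁻ y in A ∩ ball x r, ENNReal.ofReal |u y - ⨍ z in ball x (2 * r), u z ∂μ| ∂μ ≤
        (p n + q n * (μ (A ∩ ball x r) / μ (ball x r))) * (ENNReal.ofReal r * μ (ball x r)))
    (havg : ∀ r ∈ Ioc (0 : ℝ) 1, |(⨍ y in ball x r, u y ∂μ) - u x| ≤ C * r)
    {A : Set X} (hA : DensityZeroAt μ A x) :
    Tendsto (fun r : ℝ => (∫⁻ y in A ∩ ball x r, ENNReal.ofReal |u y - u x| ∂μ) /
      (ENNReal.ofReal r * μ (ball x r))) (𝓝[>] (0 : ℝ)) (𝓝 0) := by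
  set a : ℝ → ℝ≥0∞ := fun r => μ (A ∩ ball x r) / μ (ball x r)
  have hbound (n : ℕ) (r : ℝ) (hr : r ∈ Ioo (0 : ℝ) (1 / 2)) :
      (∫⁻ y in A ∩ ball x r, ENNReal.ofReal |u y - u x| ∂μ) /
        (ENNReal.ofReal r * μ (ball x r)) ≤ p n + (q n + 2 * C) * a r := by
    have h0 := (h.measure_ball_pos x hr.1).ne'
    have h1 := (h.measure_ball_lt_top x r).ne
    have hμA : μ (A ∩ ball x r) = a r * μ (ball x r) := (ENNReal.div_mul_cancel h0 h1).symm
    refine ENNReal.div_le_of_le_mul ?_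
    set b := ⨍ z in ball x (2 * r), u z ∂μ
    have hb : ENNReal.ofReal |b - u x| ≤ 2 * C * ENNReal.ofReal r := by
      have := havg (2 * r) ⟨by linarith [hr.1], by linarith [hr.2]⟩
      refine (ENNReal.ofReal_le_ofReal this).trans (le_of_eq ?_)
      rw [ENNReal.ofReal_mul C.coe_nonneg, ENNReal.ofReal_mul two_pos.le, ENNReal.ofReal_coe_nnreal,
        ENNReal.ofReal_ofNat]
      ring
    calc ∫⁻ y in A ∩ ball x r, ENNReal.ofReal |u y - u x| ∂μ
        ≤ ∫⁻ y in A ∩ ball x r, (ENNReal.ofReal |u y - b| + ENNReal.ofReal |b - u x|) ∂μ := by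
          refine lintegral_mono fun y => ?_
          rw [← ENNReal.ofReal_add (abs_nonneg _) (abs_nonneg _)]
          exact ENNReal.ofReal_le_ofReal (abs_sub_le _ _ _)
      _ = (∫⁻ y in A ∩ ball x r, ENNReal.ofReal |u y - b| ∂μ) +
            ENNReal.ofReal |b - u x| * μ (A ∩ ball x r) := by
          rw [lintegral_add_right _ measurable_const, setLIntegral_const]
      _ ≤ (p n + q n * a r) * (ENNReal.ofReal r * μ (ball x r)) +
            2 * C * ENNReal.ofReal r * μ (A ∩ ball x r) := by
          gcongr
          exact hosc A r ⟨hr.1, hr.2.le⟩ n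
      _ = _ := by
          rw [hμA]
          ring
  refine ENNReal.tendsto_nhds_zero.2 fun ε hε => ?_
  obtain ⟨n, hn⟩ := (hp.eventually (gt_mem_nhds hε)).exists
  have hlim : Tendsto (fun r => p n + (q n + 2 * C) * a r) (𝓝[>] 0) (𝓝 (p n)) := by
    have hfin : q n + 2 * C ≠ ⊤ := ENNReal.add_ne_top.2 ⟨hq n, by finiteness⟩
    simpa using tendsto_const_nhds.add (ENNReal.Tendsto.const_mul hA (.inr hfin))
  filter_upwards [hlim.eventually (gt_mem_nhds hn), Ioo_mem_nhdsGT (one_half_pos (α := ℝ))]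
    with r hr hr' using (hbound n r hr').trans hr.le

theorem statement6 {X : Type u} [MetricSpace X] [MeasurableSpace X] [BorelSpace X]
    (μ : Measure X) (Cd : ℝ≥0) (CP : ℝ) (hCd : 1 ≤ Cd) (hCP : 0 < CP)
    (hX : GoodSpace X μ Cd CP)
    (u : X → ℝ) (hu : IsBV μ u) (hrep : PreciseRep μ u) :
    ∀ᵐ x ∂μ, ∀ A : Set X, DensityZeroAt μ A x →
      Tendsto
        (fun r : ℝ =>
          (∫⁻ y in A ∩ ball x r, ENNReal.ofReal |u y - u x| ∂μ) /
            (ENNReal.ofReal r * μ (ball x r)))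
        (𝓝[>] (0:ℝ)) (𝓝 0) := by
  obtain ⟨-, -, -, h, hP⟩ := hX
  have := h.secondCountableTopology
  have := h.isUnifLocDoublingMeasure
  have := h.isLocallyFiniteMeasure
  have hvar := hu.2
  simp only [totVarOn, iInf_lt_iff] at hvar
  obtain ⟨v, hv, hT, hV⟩ := hvar
  filter_upwards [ae_exists_asympVar_ball_le (v := v) h hV.ne,
    IsUnifLocDoublingMeasure.ae_tendsto_average μ hu.1 1] with x ⟨K, hK⟩ hleb A hA
  set p : ℕ → ℝ≥0∞ := fun n => (Cd : ℝ≥0∞) ^ 5 * K * ENNReal.ofReal (CP / 2 ^ n)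
  set q : ℕ → ℝ≥0∞ := fun n =>
    (Cd : ℝ≥0∞) ^ 5 * K * ((Cd : ℝ≥0∞) ^ (n + 1) * ENNReal.ofReal (CP * 2))
  have hqtop (n : ℕ) : q n ≠ ⊤ := by finiteness
  have hptop (n : ℕ) : p n ≠ ⊤ := by finiteness
  have hplim : Tendsto p atTop (𝓝 0) := by
    have h1 : Tendsto (fun n : ℕ => CP / 2 ^ n) atTop (𝓝 0) :=
      tendsto_const_nhds.div_atTop (tendsto_pow_atTop_atTop_of_one_lt one_lt_two)
    have h2 := (ENNReal.continuous_ofReal.tendsto _).comp h1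
    simpa using ENNReal.Tendsto.const_mul h2 (.inr (by finiteness : (Cd : ℝ≥0∞) ^ 5 * K ≠ ⊤))
  have hosc (A : Set X) (r : ℝ) (hr : r ∈ Ioc (0 : ℝ) (1 / 2)) (n : ℕ) :
      ∫⁻ y in A ∩ ball x r, ENNReal.ofReal |u y - ⨍ z in ball x (2 * r), u z ∂μ| ∂μ ≤
        (p n + q n * (μ (A ∩ ball x r) / μ (ball x r))) * (ENNReal.ofReal r * μ (ball x r)) := by
    have hr0 := hr.1
    have h0 := (h.measure_ball_pos x hr0).ne'
    have hfin : μ (A ∩ ball x r) / μ (ball x r) ≠ ⊤ := ENNReal.div_ne_top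
      ((measure_mono inter_subset_right).trans_lt (h.measure_ball_lt_top x r)).ne h0
    refine (hT.lintegral_sub_average_le h hv hrep.1 (by positivity)
      (inter_subset_right.trans (ball_subset_ball (by linarith))) (by finiteness)
      fun i => hP.lintegral_inter_ball_le h hCP (hv i) A x hr0 n).trans ?_
    calc _ ≤ (Cd : ℝ≥0∞) ^ 4 * (ENNReal.ofReal (CP * (r / 2 ^ n)) +
            (Cd : ℝ≥0∞) ^ (n + 1) * ENNReal.ofReal (CP * (2 * r)) *
              (μ (A ∩ ball x r) / μ (ball x r))) * (K * (Cd * μ (ball x r))) := by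
          gcongr
          refine (hK (2 * r) ⟨by linarith, by linarith [hr.2]⟩).trans ?_
          gcongr
          exact (h x r hr0).2.1
      _ = _ := by
          rw [show CP * (r / 2 ^ n) = CP / 2 ^ n * r by ring, ← mul_assoc CP 2 r,
            ENNReal.ofReal_mul (by positivity), ENNReal.ofReal_mul (by positivity)]
          ring
  have hC : p 0 + q 0 ≠ ⊤ := ENNReal.add_ne_top.2 ⟨hptop 0, hqtop 0⟩
  refine tendsto_lintegral_inter_ball_div h hplim hqtop hosc (C := (p 0 + q 0).toNNReal)
    (fun r hr => abs_setAverage_ball_sub_le h (hT.integrableOn_ball h hv hrep.1 x) ?_ ?_ hr) hA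
  · intro r hr
    have := hosc univ r hr 0
    rwa [univ_inter, ENNReal.div_self (h.measure_ball_pos x hr.1).ne'
      (h.measure_ball_lt_top x r).ne, mul_one, ← ENNReal.coe_toNNReal hC] at this
  · refine hleb (fun _ => x) id tendsto_id ?_
    filter_upwards [self_mem_nhdsWithin] with r (hr : 0 < r)
    exact mem_closedBall_self (by simpa using hr.le)

end
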